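/- For b ∈ 𝒜, the gcd-complex Δ_gcd(b) (vertices: the monomials in the fiber C_b; faces: subsets T with gcd of the monomials in T not equal to 1) and the complex Δ_b (vertices: 1,…,n; faces: subsets F ⊆ supp(a) for some x^a ∈ C_b) have isomorphic reduced homology groups in every degree. -/

import Mathlib

/-!
Both complexes are the Dowker complexes of one relation, `R u j` meaning that `u ∈ C_b` and
`u j ≠ 0`: the faces of `Δ_gcd(b)` are the nonempty finite sets of `u`'s related to a common `j`, and
the faces of `Δ_b` are the nonempty sets of `j`'s related to a common `u`. The fibre `C_b` is finite
by Dickson's lemma (`Dowker.fiber_finite`), so the theorem is an instance of Dowker duality for a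
finite relation (`Dowker.dowker_duality`).

Dowker duality is proved with the double complex `Dowker.dbl` of chains on pairs `(F, G)` of finite
sets with `F × G ⊆ R`, of bidegree `(#F, #G)` and with empty sets allowed. Its two edges are the
augmented chain complexes of the two Dowker complexes. For fixed nonempty `G` the sets `F` run
through the finite subsets of the nonempty set of common predecessors of `G`, that is, through an
augmented full simplex; a cone contraction (`Dowker.bd_cone`) shows that this is exact, and the same
holds with the roles exchanged (`Dowker.dX_exact`, `Dowker.dY_exact`). The salamander lemma
(`Dowker.donor_eq_receptor`) then moves the homology of one edge along an antidiagonal to the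
homology of the other (`Dowker.receptorRank_eq`). Since homology is measured by dimensions,
rank–nullity is the only linear algebra needed.
-/

/-- The `𝒜`-degree of the monomial `x^u`: the image of `u` in `ℤⁿ/L`. -/
def degQ (n : ℕ) (L : AddSubgroup (Fin n → ℤ)) (u : Fin n →₀ ℕ) : (Fin n → ℤ) ⧸ L :=
  QuotientAddGroup.mk (fun i => (u i : ℤ))

/-- The faces of a simplicial complex `K` having `i + 1` vertices. -/
abbrev SFace {V : Type} (K : Set (Finset V)) (i : ℕ) : Type :=
  {F : Finset V // F ∈ K ∧ F.card = i + 1}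

open scoped Classical in
/-- The boundary of a single face of dimension `i+1`, as an `i`-chain:
the alternating sum of its codimension-one subfaces. -/
noncomputable def bdryFace (k : Type) [Field k] {V : Type} [LinearOrder V]
    (K : Set (Finset V)) (i : ℕ) (F : SFace K (i + 1)) : SFace K i →₀ k :=
  ∑ v ∈ F.1.attach,
    ((-1 : k) ^ (F.1.filter (fun w => w < v.1)).card) •
      (if h : F.1.erase v.1 ∈ K then
        Finsupp.single ⟨F.1.erase v.1, h, by
          rw [Finset.card_erase_of_mem v.2, F.2.2]; omega⟩ (1 : k)
      else 0)

/-- The simplicial boundary map `∂ : C_{i+1} → C_i` on chains with coefficients in `k`. -/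
noncomputable def bdry (k : Type) [Field k] {V : Type} [LinearOrder V]
    (K : Set (Finset V)) (i : ℕ) : (SFace K (i + 1) →₀ k) →ₗ[k] (SFace K i →₀ k) :=
  Finsupp.lsum k fun F => LinearMap.toSpanSingleton k _ (bdryFace k K i F)

/-- The augmentation map `ε : C_0 → k`. -/
noncomputable def saug (k : Type) [Field k] {V : Type}
    (K : Set (Finset V)) : (SFace K 0 →₀ k) →ₗ[k] k :=
  Finsupp.lsum k fun _ => LinearMap.id

/-- Reduced cycles: in degree `0` the kernel of the augmentation,
in degree `i+1` the kernel of the boundary map. -/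
noncomputable def scyc (k : Type) [Field k] {V : Type} [LinearOrder V]
    (K : Set (Finset V)) : (i : ℕ) → Submodule k (SFace K i →₀ k)
  | 0 => LinearMap.ker (saug k K)
  | (i + 1) => LinearMap.ker (bdry k K i)

/-- The dimension over `k` of the `i`-th reduced simplicial homology
`H̃_i(K; k) = (reduced i-cycles)/(boundaries)`, computed as
`dim (cycles) - dim (boundaries ∩ cycles)`; over the field `k` this number determines
the homology vector space up to isomorphism. -/
noncomputable def redHomologyRank (k : Type) [Field k] {V : Type} [LinearOrder V]
    (K : Set (Finset V)) (i : ℕ) : ℕ :=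
  Module.finrank k ↥(scyc k K i) -
    Module.finrank k ↥(LinearMap.range (bdry k K i) ⊓ scyc k K i)

/-- A linear order on `Fin n →₀ ℕ` (used only to orient simplices). -/
noncomputable instance (n : ℕ) : LinearOrder (Fin n →₀ ℕ) :=
  LinearOrder.lift' (toLex : (Fin n →₀ ℕ) → Lex (Fin n →₀ ℕ))
    (fun a b h => toLex.injective h)

/-- The gcd-complex `Δ_gcd(b)`: vertices are the monomials of the fiber `C_b`, faces the
subsets whose monomials have a nontrivial gcd (a common variable in their supports). -/
def gcdComplex (n : ℕ) (L : AddSubgroup (Fin n → ℤ)) (b : (Fin n → ℤ) ⧸ L) :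
    Set (Finset (Fin n →₀ ℕ)) :=
  {T | T.Nonempty ∧ (∀ u ∈ T, degQ n L u = b) ∧ ∃ j : Fin n, ∀ u ∈ T, u j ≠ 0}

/-- The complex `Δ_b` on the vertices `1, …, n`: faces are the subsets of `supp(u)`
for the various `u ∈ C_b`. -/
def deltaComplex (n : ℕ) (L : AddSubgroup (Fin n → ℤ)) (b : (Fin n → ℤ) ⧸ L) :
    Set (Finset (Fin n)) :=
  {F | F.Nonempty ∧ ∃ u : Fin n →₀ ℕ, degQ n L u = b ∧ ∀ j ∈ F, u j ≠ 0}

namespace Dowker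

open Module

/-! ### Linear algebra of a double complex -/

section LinearAlgebra

variable {k : Type} [Field k] {V W : Type} [AddCommGroup V] [Module k V] [AddCommGroup W]
  [Module k W]

theorem finrank_map_inj (f : V →ₗ[k] W) (hf : Function.Injective f) (A : Submodule k V) :
    finrank k (A.map f) = finrank k A :=
  (Submodule.equivMapOfInjective f hf A).finrank_eq.symm

/-- Rank–nullity for the restriction of a linear map to a submodule. -/
theorem finrank_inf_ker_add (f : V →ₗ[k] W) (A : Submodule k V) [FiniteDimensional k A] :
    finrank k (A.map f) + finrank k ↥(A ⊓ LinearMap.ker f) = finrank k A := by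
  have h := LinearMap.finrank_range_add_finrank_ker (f.domRestrict A)
  rw [LinearMap.range_domRestrict, LinearMap.ker_domRestrict] at h
  rw [← h, ← Submodule.map_comap_subtype,
    finrank_map_inj A.subtype A.injective_subtype]

/-- If `f` kills only elements of `A'` among those of `A`, then `A / A'` and its image under `f`
have the same dimension. -/
theorem finrank_sub_eq_map (f : V →ₗ[k] W) (A A' : Submodule k V) [FiniteDimensional k A]
    (hA : A' ≤ A) (hk : A ⊓ LinearMap.ker f ≤ A') :
    finrank k A - finrank k A' = finrank k (A.map f) - finrank k (A'.map f) := by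
  have : FiniteDimensional k A' := Submodule.finiteDimensional_of_le hA
  have h1 := finrank_inf_ker_add f A
  have h2 := finrank_inf_ker_add f A'
  have h3 : A' ⊓ LinearMap.ker f = A ⊓ LinearMap.ker f :=
    le_antisymm (inf_le_inf_right _ hA) (le_inf hk inf_le_right)
  rw [h3] at h2
  omega

/-- One extramural isomorphism of the salamander lemma, at the level of dimensions. Here
`f : E → T` is an arrow of a double complex with `N → E → T` exact at `E` and `T`, and `g` is the
differential in the other direction, `M` being the source of `g` with target `E`. The donor
`ker (g ∘ f) / (im f + im g)` at `E` is isomorphic through `f` to the receptor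
`(ker f ∩ ker g) / im (g ∘ f)` at `T`. -/
theorem donor_eq_receptor (f g : V →ₗ[k] V) (E T N M : Submodule k V) [FiniteDimensional k E]
    (hff : ∀ x, f (f x) = 0) (hgg : ∀ x, g (g x) = 0) (hc : ∀ x, f (g x) = g (f x))
    (hN : ∀ x ∈ N, f x ∈ E) (hM : ∀ x ∈ M, g x ∈ E) (hE : ∀ x ∈ E, f x ∈ T)
    (exE : ∀ x ∈ E, f x = 0 → ∃ y ∈ N, f y = x) (exT : ∀ x ∈ T, f x = 0 → ∃ y ∈ E, f y = x) :
    finrank k ↥(E ⊓ LinearMap.ker (g ∘ₗ f)) - finrank k ↥(N.map f ⊔ M.map g) =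
      finrank k ↥(T ⊓ LinearMap.ker f ⊓ LinearMap.ker g) - finrank k ↥(M.map (g ∘ₗ f)) := by
  have : FiniteDimensional k ↥(E ⊓ LinearMap.ker (g ∘ₗ f)) :=
    Submodule.finiteDimensional_of_le inf_le_left
  have h1 : (E ⊓ LinearMap.ker (g ∘ₗ f)).map f = T ⊓ LinearMap.ker f ⊓ LinearMap.ker g := by
    ext x
    simp only [Submodule.mem_map, Submodule.mem_inf, LinearMap.mem_ker, LinearMap.comp_apply]
    constructor
    · rintro ⟨y, ⟨hy, hgy⟩, rfl⟩
      exact ⟨⟨hE y hy, hff y⟩, hgy⟩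
    · rintro ⟨⟨hx, hfx⟩, hgx⟩
      obtain ⟨y, hy, rfl⟩ := exT x hx hfx
      exact ⟨y, ⟨hy, hgx⟩, rfl⟩
  have h2 : (N.map f ⊔ M.map g).map f = M.map (g ∘ₗ f) := by
    rw [Submodule.map_sup, ← Submodule.map_comp, ← Submodule.map_comp]
    have h3 : f ∘ₗ f = 0 := LinearMap.ext hff
    have h4 : f ∘ₗ g = g ∘ₗ f := LinearMap.ext hc
    rw [h3, h4, Submodule.map_zero, bot_sup_eq]
  rw [← h1, ← h2]
  apply finrank_sub_eq_map
  · refine sup_le ?_ ?_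
    · rintro _ ⟨y, hy, rfl⟩
      exact ⟨hN y hy, by simp [hff]⟩
    · rintro _ ⟨y, hy, rfl⟩
      exact ⟨hM y hy, by simp [hc, hgg]⟩
  · rintro x ⟨⟨hx, -⟩, hfx⟩
    obtain ⟨y, hy, rfl⟩ := exE x hx hfx
    exact Submodule.mem_sup_left ⟨y, hy, rfl⟩

variable (dh dv : V →ₗ[k] V) (D : ℕ → ℕ → Submodule k V)

/-- The dimension of the receptor `(ker dh ∩ ker dv) / im (dv ∘ dh)` at the spot `(p, q)`. -/
noncomputable def receptorRank (p q : ℕ) : ℕ :=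
  finrank k ↥(D p q ⊓ LinearMap.ker dh ⊓ LinearMap.ker dv) -
    finrank k ↥((D (p + 1) (q + 1)).map (dv ∘ₗ dh))

/-- In a double complex with `dh` exact in the columns `q ≥ 1` and `dv` exact in the rows
`p ≥ 1`, receptors are constant along antidiagonals. -/
theorem receptorRank_eq [∀ p q, FiniteDimensional k (D p q)]
    (hhh : ∀ x, dh (dh x) = 0) (hvv : ∀ x, dv (dv x) = 0) (hc : ∀ x, dh (dv x) = dv (dh x))
    (mh : ∀ p q, ∀ x ∈ D (p + 1) q, dh x ∈ D p q)
    (mv : ∀ p q, ∀ x ∈ D p (q + 1), dv x ∈ D p q)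
    (eh : ∀ p q, ∀ x ∈ D p (q + 1), dh x = 0 → ∃ y ∈ D (p + 1) (q + 1), dh y = x)
    (ev : ∀ p q, ∀ x ∈ D (p + 1) q, dv x = 0 → ∃ y ∈ D (p + 1) (q + 1), dv y = x)
    (p q : ℕ) : receptorRank dh dv D p q = receptorRank dh dv D (p + q) 0 := by
  induction q generalizing p with
  | zero => rfl
  | succ q ih =>
    have hcomp : dh ∘ₗ dv = dv ∘ₗ dh := LinearMap.ext hc
    have h1 := donor_eq_receptor dh dv (D (p + 1) (q + 1)) (D p (q + 1)) (D (p + 2) (q + 1))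
      (D (p + 1) (q + 2)) hhh hvv hc (mh _ _) (mv _ _) (mh _ _) (eh _ _) (eh _ _)
    have h2 := donor_eq_receptor dv dh (D (p + 1) (q + 1)) (D (p + 1) q) (D (p + 1) (q + 2))
      (D (p + 2) (q + 1)) hvv hhh (fun x => (hc x).symm) (mv _ _) (mh _ _) (mv _ _) (ev _ _)
      (ev _ _)
    rw [hcomp, sup_comm, h1, inf_right_comm (D (p + 1) q)] at h2
    have h3 : receptorRank dh dv D p (q + 1) = receptorRank dh dv D (p + 1) q := h2
    rw [h3, ih, add_assoc, add_comm 1 q]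

end LinearAlgebra

/-! ### The chain complex of the full simplex -/

section Simplex

variable (k : Type) [Field k] {X : Type} [LinearOrder X]

/-- The incidence sign of `v` in `F`: minus one to the number of vertices of `F` before `v`. -/
def sg (v : X) (F : Finset X) : k := (-1) ^ (F.filter (fun w => w < v)).card

/-- The boundary operator of the full simplex on `X`, in all degrees at once. The empty simplex is
included, so that the boundary in dimension `0` is the augmentation. -/
noncomputable def bd : (Finset X →₀ k) →ₗ[k] (Finset X →₀ k) :=
  Finsupp.linearCombination k fun F => ∑ v ∈ F, sg k v F • Finsupp.single (F.erase v) (1 : k)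

/-- The cone operator with apex `x`. -/
noncomputable def cone (x : X) : (Finset X →₀ k) →ₗ[k] (Finset X →₀ k) :=
  Finsupp.linearCombination k fun F =>
    if x ∈ F then 0 else sg k x F • Finsupp.single (insert x F) (1 : k)

theorem bd_single (F : Finset X) : bd k (Finsupp.single F 1) =
    ∑ v ∈ F, sg k v F • Finsupp.single (F.erase v) (1 : k) := by
  simp [bd]

theorem cone_single (x : X) (F : Finset X) : cone k x (Finsupp.single F 1) =
    if x ∈ F then 0 else sg k x F • Finsupp.single (insert x F) (1 : k) := by
  simp [cone]

theorem sg_mul_self (v : X) (F : Finset X) : sg k v F * sg k v F = 1 := by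
  rw [sg, ← mul_pow]; simp

theorem sg_insert (v x : X) (F : Finset X) (hx : x ∉ F) :
    sg k v (insert x F) = (if x < v then -1 else 1) * sg k v F := by
  unfold sg
  rw [Finset.filter_insert]
  split_ifs
  · rw [Finset.card_insert_of_notMem (by simp [hx]), pow_succ']
  · simp

/-- The cone operator is a contraction: `∂ ∘ cone + cone ∘ ∂ = id`. -/
theorem bd_cone (x : X) (z : Finset X →₀ k) : bd k (cone k x z) + cone k x (bd k z) = z := by
  suffices h : bd k ∘ₗ cone k x + cone k x ∘ₗ bd k = LinearMap.id from LinearMap.congr_fun h z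
  refine Finsupp.lhom_ext' fun F => LinearMap.ext_ring ?_
  simp only [LinearMap.comp_apply, LinearMap.add_apply, LinearMap.id_apply,
    Finsupp.lsingle_apply]
  rw [cone_single, bd_single, map_sum]
  simp only [map_smul, cone_single]
  by_cases hx : x ∈ F
  · rw [if_pos hx, map_zero, zero_add, Finset.sum_eq_single x]
    · have h := sg_insert k x x (F.erase x) (by simp)
      rw [Finset.insert_erase hx] at h
      rw [if_neg (by simp), smul_smul, Finset.insert_erase hx, h]
      simp [sg_mul_self]
    · intro v _ hvx
      rw [if_pos (by simp [hx, Ne.symm hvx]), smul_zero]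
    · exact fun h => absurd hx h
  · rw [if_neg hx, map_smul, bd_single, Finset.sum_insert hx, smul_add, smul_smul,
      Finset.erase_insert hx, sg_insert k x x F hx]
    simp only [lt_irrefl, if_false, one_mul, sg_mul_self, one_smul]
    rw [add_assoc, Finset.smul_sum, ← Finset.sum_add_distrib, Finset.sum_eq_zero, add_zero]
    intro v hv
    have hvx : v ≠ x := fun h => hx (h ▸ hv)
    have h1 := sg_insert k x v (F.erase v) (by simp)
    rw [Finset.insert_erase hv] at h1
    rw [if_neg (by simp [hx]), Finset.erase_insert_of_ne hvx.symm, smul_smul, smul_smul,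
      ← add_smul, sg_insert k v x F hx, h1]
    rcases lt_or_gt_of_ne hvx with h | h
    · convert zero_smul k _ using 2
      simp only [h, h.not_gt, if_true, if_false]
      ring
    · convert zero_smul k _ using 2
      simp only [h, h.not_gt, if_true, if_false]
      ring

/-- A simplex is, up to sign, the cone over a facet, and the contraction gives
`∂ ∂ cone = cone ∂ ∂`; so `∂ ∂ = 0` by induction on the number of vertices. -/
theorem bd_bd (z : Finset X →₀ k) : bd k (bd k z) = 0 := by
  suffices h : bd k ∘ₗ bd k = (0 : (Finset X →₀ k) →ₗ[k] _) by
    rw [← LinearMap.comp_apply, h, LinearMap.zero_apply]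
  refine Finsupp.lhom_ext' fun F => LinearMap.ext_ring ?_
  simp only [LinearMap.comp_apply, LinearMap.zero_apply, Finsupp.lsingle_apply]
  induction F using Finset.induction_on with
  | empty => simp [bd_single]
  | insert x F hx ih =>
    have h1 := bd_cone k x (Finsupp.single F 1)
    have h2 := bd_cone k x (bd k (Finsupp.single F 1))
    rw [ih, map_zero, add_zero] at h2
    have h3 : bd k (bd k (cone k x (Finsupp.single F 1))) = 0 := by
      rw [eq_sub_of_add_eq h1, map_sub, h2, sub_self]
    rw [cone_single, if_neg hx, map_smul, map_smul] at h3
    rcases smul_eq_zero.1 h3 with h | h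
    · have := sg_mul_self k x F
      simp [h] at this
    · exact h

end Simplex

/-! ### Reduced homology inside the full simplex -/

section Reduced

set_option linter.unusedSectionVars false

variable (k : Type) [Field k] {X : Type} [LinearOrder X]

/-- The chains on the faces of `K` with `m` vertices. -/
def chains (K : Set (Finset X)) (m : ℕ) : Submodule k (Finset X →₀ k) :=
  Finsupp.supported k k {F | F ∈ K ∧ F.card = m}

/-- Chains on the `i`-dimensional faces of `K`, as chains of the full simplex. -/
noncomputable def incl (K : Set (Finset X)) (i : ℕ) :
    (SFace K i →₀ k) →ₗ[k] (Finset X →₀ k) :=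
  Finsupp.lmapDomain k k Subtype.val

theorem incl_injective (K : Set (Finset X)) (i : ℕ) : Function.Injective (incl k K i) :=
  Finsupp.mapDomain_injective Subtype.val_injective

theorem range_incl (K : Set (Finset X)) (i : ℕ) :
    LinearMap.range (incl k K i) = chains k K (i + 1) := by
  rw [LinearMap.range_eq_map, ← Finsupp.supported_univ, incl, Finsupp.lmapDomain_supported,
    chains, Set.image_univ]
  congr 1
  exact Subtype.range_val

theorem incl_bdry (K : Set (Finset X))
    (hK : ∀ F ∈ K, ∀ G ⊆ F, G.Nonempty → G ∈ K) (i : ℕ) (c : SFace K (i + 1) →₀ k) :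
    incl k K i (bdry k K i c) = bd k (incl k K (i + 1) c) := by
  suffices h : incl k K i ∘ₗ bdry k K i = bd k ∘ₗ incl k K (i + 1) from LinearMap.congr_fun h c
  refine Finsupp.lhom_ext' fun F => LinearMap.ext_ring ?_
  simp only [LinearMap.comp_apply, Finsupp.lsingle_apply]
  simp only [incl, Finsupp.lmapDomain_apply, Finsupp.mapDomain_single, bd_single]
  simp only [bdry, Finsupp.lsum_single, LinearMap.toSpanSingleton_apply, one_smul, bdryFace]
  rw [← Finsupp.lmapDomain_apply k k, map_sum, ← Finset.sum_attach F.1]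
  refine Finset.sum_congr rfl fun v _ => ?_
  have hcard : (F.1.erase v.1).card = i + 1 := by
    rw [Finset.card_erase_of_mem v.2, F.2.2]; omega
  rw [dif_pos (hK F.1 F.2.1 _ (Finset.erase_subset _ _)
    (Finset.card_pos.1 (by omega))), map_smul, Finsupp.lmapDomain_apply,
    Finsupp.mapDomain_single]
  rfl

/-- The augmentation is the boundary into the span of the empty simplex. -/
theorem bd_incl_zero (K : Set (Finset X)) (c : SFace K 0 →₀ k) :
    bd k (incl k K 0 c) = Finsupp.single ∅ (saug k K c) := by
  suffices h : bd k ∘ₗ incl k K 0 = Finsupp.lsingle ∅ ∘ₗ saug k K from LinearMap.congr_fun h c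
  refine Finsupp.lhom_ext' fun F => LinearMap.ext_ring ?_
  obtain ⟨F, hF, hc⟩ := F
  obtain ⟨v, rfl⟩ := Finset.card_eq_one.1 hc
  simp [incl, saug, bd_single, sg, Finset.filter_singleton]

theorem map_incl_scyc (K : Set (Finset X))
    (hK : ∀ F ∈ K, ∀ G ⊆ F, G.Nonempty → G ∈ K) (i : ℕ) :
    (scyc k K i).map (incl k K i) = chains k K (i + 1) ⊓ LinearMap.ker (bd k) := by
  have key : scyc k K i = (LinearMap.ker (bd k)).comap (incl k K i) := by
    cases i with
    | zero =>
      ext c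
      simp only [scyc, LinearMap.mem_ker, Submodule.mem_comap, bd_incl_zero,
        Finsupp.single_eq_zero]
    | succ i =>
      ext c
      simp only [scyc, LinearMap.mem_ker, Submodule.mem_comap, ← incl_bdry k K hK]
      exact (map_eq_zero_iff _ (incl_injective k K i)).symm
  rw [key, Submodule.map_comap_eq, range_incl]

theorem range_bdry_le (K : Set (Finset X))
    (hK : ∀ F ∈ K, ∀ G ⊆ F, G.Nonempty → G ∈ K) (i : ℕ) :
    LinearMap.range (bdry k K i) ≤ scyc k K i := by
  rintro _ ⟨c, rfl⟩
  have h : incl k K i (bdry k K i c) ∈ (scyc k K i).map (incl k K i) := by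
    rw [map_incl_scyc k K hK, ← range_incl]
    refine ⟨⟨_, rfl⟩, ?_⟩
    rw [SetLike.mem_coe, LinearMap.mem_ker, incl_bdry k K hK, bd_bd]
  obtain ⟨c', hc', h⟩ := h
  rwa [← incl_injective k K i h]

theorem redHomologyRank_eq (K : Set (Finset X))
    (hK : ∀ F ∈ K, ∀ G ⊆ F, G.Nonempty → G ∈ K) (i : ℕ) :
    redHomologyRank k K i = finrank k ↥(chains k K (i + 1) ⊓ LinearMap.ker (bd k)) -
      finrank k ↥((chains k K (i + 2)).map (bd k)) := by
  have h : (LinearMap.range (bdry k K i)).map (incl k K i) =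
      (chains k K (i + 2)).map (bd k) := by
    rw [← range_incl k K (i + 1), LinearMap.range_eq_map, LinearMap.range_eq_map,
      ← Submodule.map_comp, ← Submodule.map_comp]
    congr 1
    exact LinearMap.ext (incl_bdry k K hK i)
  rw [redHomologyRank, inf_eq_left.2 (range_bdry_le k K hK i), ← h, ← map_incl_scyc k K hK,
    finrank_map_inj _ (incl_injective k K i), finrank_map_inj _ (incl_injective k K i)]

end Reduced

/-! ### Fibrewise operators on chains of a product -/

section Fibrewise

variable (k : Type) [Field k] {A T P : Type}

/-- The fibrewise operator on `P ≃ A × T` that acts by `f t` on the chains of the fibre over `t`.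
Allowing an arbitrary identification `P ≃ A × T` covers both factors of a product. -/
noncomputable def fib (e : A × T ≃ P) (f : T → (A →₀ k) →ₗ[k] (A →₀ k)) :
    (P →₀ k) →ₗ[k] (P →₀ k) :=
  Finsupp.linearCombination k fun p =>
    Finsupp.lmapDomain k k (fun a => e (a, (e.symm p).2))
      (f (e.symm p).2 (Finsupp.single (e.symm p).1 1))

theorem fib_map (e : A × T ≃ P) (f : T → (A →₀ k) →ₗ[k] (A →₀ k)) (t : T) (z : A →₀ k) :
    fib k e f (Finsupp.lmapDomain k k (fun a => e (a, t)) z) =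
      Finsupp.lmapDomain k k (fun a => e (a, t)) (f t z) := by
  suffices h : fib k e f ∘ₗ Finsupp.lmapDomain k k (fun a => e (a, t)) =
      Finsupp.lmapDomain k k (fun a => e (a, t)) ∘ₗ f t from LinearMap.congr_fun h z
  refine Finsupp.lhom_ext' fun a => LinearMap.ext_ring ?_
  simp [fib, Finsupp.mapDomain_single]

theorem single_eq_map (e : A × T ≃ P) (p : P) : (Finsupp.single p 1 : P →₀ k) =
    Finsupp.lmapDomain k k (fun a => e (a, (e.symm p).2)) (Finsupp.single (e.symm p).1 1) := by
  simp [Finsupp.mapDomain_single]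

theorem fib_fib (e : A × T ≃ P) (f g : T → (A →₀ k) →ₗ[k] (A →₀ k)) (x : P →₀ k) :
    fib k e f (fib k e g x) = fib k e (fun t => f t ∘ₗ g t) x := by
  suffices h : fib k e f ∘ₗ fib k e g = fib k e (fun t => f t ∘ₗ g t) by
    rw [← h, LinearMap.comp_apply]
  refine Finsupp.lhom_ext' fun p => LinearMap.ext_ring ?_
  simp only [LinearMap.comp_apply, Finsupp.lsingle_apply]
  rw [single_eq_map k e p, fib_map, fib_map, fib_map, LinearMap.comp_apply]

theorem fib_add (e : A × T ≃ P) (f g : T → (A →₀ k) →ₗ[k] (A →₀ k)) (x : P →₀ k) :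
    fib k e f x + fib k e g x = fib k e (fun t => f t + g t) x := by
  suffices h : fib k e f + fib k e g = fib k e (fun t => f t + g t) by
    rw [← h, LinearMap.add_apply]
  refine Finsupp.lhom_ext' fun p => LinearMap.ext_ring ?_
  simp only [LinearMap.comp_apply, Finsupp.lsingle_apply, LinearMap.add_apply]
  rw [single_eq_map k e p, fib_map, fib_map, fib_map, LinearMap.add_apply, map_add]

theorem fib_id (e : A × T ≃ P) (x : P →₀ k) :
    fib k e (fun _ => LinearMap.id) x = x := by
  suffices h : fib k e (fun _ => LinearMap.id) = LinearMap.id by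
    rw [h, LinearMap.id_apply]
  refine Finsupp.lhom_ext' fun p => LinearMap.ext_ring ?_
  simp only [LinearMap.comp_apply, Finsupp.lsingle_apply, LinearMap.id_apply]
  conv_lhs => rw [single_eq_map k e p]
  rw [fib_map, LinearMap.id_apply, ← single_eq_map k e p]

/-- A fibrewise operator maps chains supported on `S` to chains supported on `S'` as soon as it does
so on basis elements. -/
theorem fib_mem (e : A × T ≃ P) (f : T → (A →₀ k) →ₗ[k] (A →₀ k)) (S S' : Set P)
    (h : ∀ a t, e (a, t) ∈ S →
      f t (Finsupp.single a 1) ∈ Finsupp.supported k k {a' | e (a', t) ∈ S'})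
    (x : P →₀ k) (hx : x ∈ Finsupp.supported k k S) :
    fib k e f x ∈ Finsupp.supported k k S' := by
  suffices hle : Finsupp.supported k k S ≤ (Finsupp.supported k k S').comap (fib k e f) from hle hx
  rw [Finsupp.supported_eq_span_single, Submodule.span_le]
  rintro _ ⟨p, hp, rfl⟩
  change fib k e f (Finsupp.single p 1) ∈ Finsupp.supported k k S'
  rw [single_eq_map k e p, fib_map]
  have h1 := h (e.symm p).1 (e.symm p).2 (by simpa using hp)
  have h2 := Submodule.mem_map_of_mem
    (f := Finsupp.lmapDomain k k (fun a => e (a, (e.symm p).2))) h1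
  rw [Finsupp.lmapDomain_supported] at h2
  refine Finsupp.supported_mono ?_ h2
  rintro _ ⟨a, ha, rfl⟩
  exact ha

variable {X : Type} [LinearOrder X]

/-- The fibrewise simplicial boundary. -/
noncomputable def fbd (e : Finset X × T ≃ P) : (P →₀ k) →ₗ[k] (P →₀ k) := fib k e fun _ => bd k

theorem fbd_fbd (e : Finset X × T ≃ P) (x : P →₀ k) : fbd k e (fbd k e x) = 0 := by
  have h : (fun _ : T => bd k ∘ₗ bd k) =
      fun _ : T => (0 : (Finset X →₀ k) →ₗ[k] (Finset X →₀ k)) :=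
    funext fun _ => LinearMap.ext (bd_bd k)
  rw [fbd, fib_fib, h]
  simp [fib, Finsupp.linearCombination_apply]

theorem fbd_mem (e : Finset X × T ≃ P) (S S' : Set P)
    (h : ∀ F t, ∀ v ∈ F, e (F, t) ∈ S → e (F.erase v, t) ∈ S')
    (x : P →₀ k) (hx : x ∈ Finsupp.supported k k S) :
    fbd k e x ∈ Finsupp.supported k k S' := by
  refine fib_mem k e _ S S' (fun F t hF => ?_) x hx
  rw [bd_single]
  exact Submodule.sum_mem _ fun v hv =>
    Submodule.smul_mem _ _ (Finsupp.single_mem_supported k _ (h F t v hv hF))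

/-- Fibrewise exactness: over each `t` the cone with apex `x₀ t` bounds every cycle. -/
theorem fbd_exact (e : Finset X × T ≃ P) (x₀ : T → X) (S S' : Set P)
    (h : ∀ F t, e (F, t) ∈ S → x₀ t ∉ F → e (insert (x₀ t) F, t) ∈ S')
    (x : P →₀ k) (hx : x ∈ Finsupp.supported k k S) (h0 : fbd k e x = 0) :
    ∃ y ∈ Finsupp.supported k k S', fbd k e y = x := by
  refine ⟨fib k e (fun t => cone k (x₀ t)) x, ?_, ?_⟩
  · refine fib_mem k e _ S S' (fun F t hF => ?_) x hx
    rw [cone_single]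
    split_ifs with hxF
    · exact Submodule.zero_mem _
    · exact Submodule.smul_mem _ _ (Finsupp.single_mem_supported k _ (h F t hF hxF))
  · have h1 := fib_add k e (fun t => bd k ∘ₗ cone k (x₀ t)) (fun t => cone k (x₀ t) ∘ₗ bd k) x
    have h2 : (fun t => bd k ∘ₗ cone k (x₀ t) + cone k (x₀ t) ∘ₗ bd k) =
        fun _ : T => (LinearMap.id : (Finset X →₀ k) →ₗ[k] (Finset X →₀ k)) :=
      funext fun t => LinearMap.ext (bd_cone k (x₀ t))
    rw [h2, fib_id, ← fib_fib, ← fib_fib] at h1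
    change fbd k e _ + fib k e _ (fbd k e x) = x at h1
    rwa [h0, map_zero, add_zero] at h1

end Fibrewise

/-! ### Dowker duality -/

section Duality

variable (k : Type) [Field k] {X Y : Type}

/-- The Dowker complex of a relation `R` on `X × Y`: the nonempty finite subsets of `X` all of whose
elements are related to a common element of `Y`. -/
def dowker (R : X → Y → Prop) : Set (Finset X) :=
  {F | F.Nonempty ∧ ∃ y, ∀ x ∈ F, R x y}

theorem dowker_down (R : X → Y → Prop) :
    ∀ F ∈ dowker R, ∀ G ⊆ F, G.Nonempty → G ∈ dowker R := by
  rintro F ⟨-, y, hy⟩ G hG hne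
  exact ⟨hne, y, fun x hx => hy x (hG hx)⟩

/-- The pairs of finite sets of `p` and `q` elements whose product lies in `R`. When one of them is
empty, the other one is required to be empty or a face of its Dowker complex, which the last two
conditions encode. -/
def pairs (R : X → Y → Prop) (p q : ℕ) : Set (Finset X × Finset Y) :=
  {s | s.1.card = p ∧ s.2.card = q ∧ (∀ x ∈ s.1, ∀ y ∈ s.2, R x y) ∧
    (∃ x, ∀ y ∈ s.2, R x y) ∧ ∃ y, ∀ x ∈ s.1, R x y}

theorem pairs_finite (R : X → Y → Prop) (hR : {s : X × Y | R s.1 s.2}.Finite) (p q : ℕ) :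
    (pairs R p q).Finite := by
  have h1 : {F : Finset X | (F : Set X) ⊆ Prod.fst '' {s : X × Y | R s.1 s.2}}.Finite :=
    Set.Finite.subset (Finset.finite_toSet (hR.image _).toFinset.powerset) fun F hF => by
      rw [Finset.mem_coe, Finset.mem_powerset]
      exact fun a ha => (hR.image _).mem_toFinset.2 (hF ha)
  have h2 : {F : Finset Y | (F : Set Y) ⊆ Prod.snd '' {s : X × Y | R s.1 s.2}}.Finite :=
    Set.Finite.subset (Finset.finite_toSet (hR.image _).toFinset.powerset) fun F hF => by
      rw [Finset.mem_coe, Finset.mem_powerset]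
      exact fun a ha => (hR.image _).mem_toFinset.2 (hF ha)
  refine (h1.prod h2).subset ?_
  rintro ⟨F, G⟩ ⟨-, -, -, ⟨x, hx⟩, y, hy⟩
  exact ⟨fun a ha => ⟨(a, y), hy a ha, rfl⟩, fun c hc => ⟨(x, c), hx c hc, rfl⟩⟩

set_option linter.unusedSectionVars false

variable [LinearOrder X] [LinearOrder Y]

/-- The boundary in the first factor. -/
noncomputable def dX : (Finset X × Finset Y →₀ k) →ₗ[k] (Finset X × Finset Y →₀ k) :=
  fbd k (Equiv.refl _)

/-- The boundary in the second factor. -/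
noncomputable def dY : (Finset X × Finset Y →₀ k) →ₗ[k] (Finset X × Finset Y →₀ k) :=
  fbd k (Equiv.prodComm _ _)

theorem dX_single (F : Finset X) (G : Finset Y) :
    dX k (Finsupp.single (F, G) 1) =
      ∑ v ∈ F, sg k v F • Finsupp.single (F.erase v, G) (1 : k) := by
  simp only [dX, fbd, fib, Finsupp.linearCombination_single, one_smul, Equiv.refl_symm,
    Equiv.refl_apply, bd_single, map_sum, map_smul, Finsupp.lmapDomain_apply,
    Finsupp.mapDomain_single]

theorem dY_single (F : Finset X) (G : Finset Y) :
    dY k (Finsupp.single (F, G) 1) =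
      ∑ w ∈ G, sg k w G • Finsupp.single (F, G.erase w) (1 : k) := by
  simp only [dY, fbd, fib, Finsupp.linearCombination_single, one_smul, Equiv.prodComm_symm,
    Equiv.prodComm_apply, Prod.swap_prod_mk, bd_single, map_sum, map_smul,
    Finsupp.lmapDomain_apply, Finsupp.mapDomain_single]

theorem dX_dY (x : Finset X × Finset Y →₀ k) : dX k (dY k x) = dY k (dX k x) := by
  suffices h : dX k ∘ₗ dY k = dY k ∘ₗ (dX k : (Finset X × Finset Y →₀ k) →ₗ[k] _) from
    LinearMap.congr_fun h x
  refine Finsupp.lhom_ext' fun s => LinearMap.ext_ring ?_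
  obtain ⟨F, G⟩ := s
  simp only [LinearMap.comp_apply, Finsupp.lsingle_apply, dX_single, dY_single, map_sum, map_smul,
    Finset.smul_sum]
  rw [Finset.sum_comm]
  exact Finset.sum_congr rfl fun v _ => Finset.sum_congr rfl fun w _ => smul_comm _ _ _

/-- Reduced homology of a complex `K` computed after an injective chain map `J` into a module with
an endomorphism `d`, where `E m` is the image of the chains on the faces with `m` vertices. -/
theorem redHomologyRank_eq_of_embedding {Z V : Type} [LinearOrder Z] [AddCommGroup V] [Module k V]
    (K : Set (Finset Z)) (hK : ∀ F ∈ K, ∀ G ⊆ F, G.Nonempty → G ∈ K) (i : ℕ)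
    (J : (Finset Z →₀ k) →ₗ[k] V) (hJ : Function.Injective J) (d : V →ₗ[k] V)
    (hd : ∀ z, d (J z) = J (bd k z)) (E : ℕ → Submodule k V)
    (hE : ∀ m, (chains k K (m + 1)).map J = E (m + 1)) :
    redHomologyRank k K i = finrank k ↥(E (i + 1) ⊓ LinearMap.ker d) -
      finrank k ↥((E (i + 2)).map d) := by
  have h1 : (chains k K (i + 1) ⊓ LinearMap.ker (bd k)).map J = E (i + 1) ⊓ LinearMap.ker d := by
    rw [← hE]
    ext x
    constructor
    · rintro ⟨z, ⟨hz, hz0⟩, rfl⟩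
      refine ⟨⟨z, hz, rfl⟩, ?_⟩
      rw [SetLike.mem_coe, LinearMap.mem_ker, hd, LinearMap.mem_ker.1 hz0, map_zero]
    · rintro ⟨⟨z, hz, rfl⟩, hz0⟩
      rw [SetLike.mem_coe, LinearMap.mem_ker, hd] at hz0
      exact ⟨z, ⟨hz, (map_eq_zero_iff _ hJ).1 hz0⟩, rfl⟩
  have h2 : ((chains k K (i + 2)).map (bd k)).map J = (E (i + 2)).map d := by
    rw [← hE, ← Submodule.map_comp, ← Submodule.map_comp]
    congr 1
    exact LinearMap.ext fun z => (hd z).symm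
  rw [redHomologyRank_eq k K hK, ← h1, ← h2, finrank_map_inj J hJ, finrank_map_inj J hJ]

variable (R : X → Y → Prop)

/-- The Dowker double complex: chains on the pairs of a given bidegree. -/
def dbl (p q : ℕ) : Submodule k (Finset X × Finset Y →₀ k) := Finsupp.supported k k (pairs R p q)

theorem dX_mem (p q : ℕ) : ∀ x ∈ dbl k R (p + 1) q, dX k x ∈ dbl k R p q := by
  refine fun x hx => fbd_mem k _ _ _ ?_ x hx
  rintro F G v hv ⟨h1, h2, h3, h4, y, hy⟩
  dsimp only [Equiv.refl_apply] at *
  exact ⟨by rw [Finset.card_erase_of_mem hv, h1]; rfl, h2,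
    fun x hx => h3 x (Finset.mem_of_mem_erase hx), h4, y,
    fun x hx => hy x (Finset.mem_of_mem_erase hx)⟩

theorem dY_mem (p q : ℕ) : ∀ x ∈ dbl k R p (q + 1), dY k x ∈ dbl k R p q := by
  refine fun x hx => fbd_mem k _ _ _ ?_ x hx
  rintro G F w hw ⟨h1, h2, h3, ⟨x, hx⟩, h5⟩
  dsimp only [Equiv.prodComm_apply, Prod.swap_prod_mk] at *
  exact ⟨h1, by rw [Finset.card_erase_of_mem hw, h2]; rfl,
    fun x hx y hy => h3 x hx y (Finset.mem_of_mem_erase hy),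
    ⟨x, fun y hy => hx y (Finset.mem_of_mem_erase hy)⟩, h5⟩

/-- Over a nonempty `G` the first factor runs through all finite subsets of the nonempty set of
common `R`-predecessors of `G`, so the columns `q ≥ 1` are exact. -/
theorem dX_exact (p q : ℕ) : ∀ x ∈ dbl k R p (q + 1), dX k x = 0 →
    ∃ y ∈ dbl k R (p + 1) (q + 1), dX k y = x := by
  intro x hx h0
  rcases isEmpty_or_nonempty X with hX | hX
  · have : pairs R p (q + 1) = ∅ := by
      ext s
      simp [pairs]
    rw [dbl, this, Finsupp.supported_empty, Submodule.mem_bot] at hx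
    exact ⟨0, Submodule.zero_mem _, by rw [hx, map_zero]⟩
  have hch : ∀ G : Finset Y, ∃ x₀ : X, (∃ x, ∀ y ∈ G, R x y) → ∀ y ∈ G, R x₀ y := by
    intro G
    by_cases h : ∃ x, ∀ y ∈ G, R x y
    · obtain ⟨x, hx⟩ := h
      exact ⟨x, fun _ => hx⟩
    · exact ⟨hX.some, fun h' => absurd h' h⟩
  choose x₀ hx₀ using hch
  refine fbd_exact k _ x₀ _ _ ?_ x hx h0
  rintro F G ⟨h1, h2, h3, h4, h5⟩ hF
  dsimp only [Equiv.refl_apply] at *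
  obtain ⟨y, hy⟩ := Finset.card_pos.1 (h2 ▸ Nat.succ_pos q : 0 < G.card)
  have h6 : ∀ x ∈ insert (x₀ G) F, ∀ y ∈ G, R x y := by
    intro x hx
    rcases Finset.mem_insert.1 hx with rfl | hx
    · exact hx₀ G h4
    · exact h3 x hx
  exact ⟨by rw [Finset.card_insert_of_notMem hF, h1], h2, h6, h4, y, fun x hx => h6 x hx y hy⟩

theorem dY_exact (p q : ℕ) : ∀ x ∈ dbl k R (p + 1) q, dY k x = 0 →
    ∃ y ∈ dbl k R (p + 1) (q + 1), dY k y = x := by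
  intro x hx h0
  rcases isEmpty_or_nonempty Y with hY | hY
  · have : pairs R (p + 1) q = ∅ := by
      ext s
      simp [pairs]
    rw [dbl, this, Finsupp.supported_empty, Submodule.mem_bot] at hx
    exact ⟨0, Submodule.zero_mem _, by rw [hx, map_zero]⟩
  have hch : ∀ F : Finset X, ∃ y₀ : Y, (∃ y, ∀ x ∈ F, R x y) → ∀ x ∈ F, R x y₀ := by
    intro F
    by_cases h : ∃ y, ∀ x ∈ F, R x y
    · obtain ⟨y, hy⟩ := h
      exact ⟨y, fun _ => hy⟩
    · exact ⟨hY.some, fun h' => absurd h' h⟩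
  choose y₀ hy₀ using hch
  refine fbd_exact k _ y₀ _ _ ?_ x hx h0
  rintro G F ⟨h1, h2, h3, h4, h5⟩ hG
  dsimp only [Equiv.prodComm_apply, Prod.swap_prod_mk] at *
  obtain ⟨x, hx⟩ := Finset.card_pos.1 (h1 ▸ Nat.succ_pos p : 0 < F.card)
  have h6 : ∀ x ∈ F, ∀ y ∈ insert (y₀ F) G, R x y := by
    intro x hx y hy
    rcases Finset.mem_insert.1 hy with rfl | hy
    · exact hy₀ F h5 x hx
    · exact h3 x hx y hy
  exact ⟨h1, by rw [Finset.card_insert_of_notMem hG, h2], h6, ⟨x, fun y hy => h6 x hx y hy⟩, h5⟩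

theorem dX_zero (q : ℕ) : ∀ x ∈ dbl k R 0 q, dX k x = 0 := by
  suffices h : dbl k R 0 q ≤ LinearMap.ker (dX k) from h
  rw [dbl, Finsupp.supported_eq_span_single, Submodule.span_le]
  rintro _ ⟨⟨F, G⟩, ⟨hF, -⟩, rfl⟩
  obtain rfl := Finset.card_eq_zero.1 hF
  simp [dX_single]

theorem dY_zero (p : ℕ) : ∀ x ∈ dbl k R p 0, dY k x = 0 := by
  suffices h : dbl k R p 0 ≤ LinearMap.ker (dY k) from h
  rw [dbl, Finsupp.supported_eq_span_single, Submodule.span_le]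
  rintro _ ⟨⟨F, G⟩, ⟨-, hG, -⟩, rfl⟩
  obtain rfl := Finset.card_eq_zero.1 hG
  simp [dY_single]

/-- The first edge of the double complex is the chain complex of the Dowker complex on `X`. -/
theorem map_chains_dowker (m : ℕ) :
    (chains k (dowker R) (m + 1)).map
      (Finsupp.lmapDomain k k fun F : Finset X => (F, (∅ : Finset Y))) = dbl k R (m + 1) 0 := by
  rw [chains, Finsupp.lmapDomain_supported, dbl]
  congr 1
  ext ⟨F, G⟩
  constructor
  · rintro ⟨F, ⟨⟨⟨x, hx⟩, hy⟩, hF⟩, h⟩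
    obtain ⟨rfl, rfl⟩ := Prod.mk.inj h
    exact ⟨hF, rfl, by simp, ⟨x, by simp⟩, hy⟩
  · rintro ⟨hF, hG, -, -, hy⟩
    obtain rfl := Finset.card_eq_zero.1 hG
    exact ⟨F, ⟨⟨Finset.card_pos.1 (hF ▸ Nat.succ_pos m), hy⟩, hF⟩, rfl⟩

theorem map_chains_dowker_flip (m : ℕ) :
    (chains k (dowker (flip R)) (m + 1)).map
      (Finsupp.lmapDomain k k fun G : Finset Y => ((∅ : Finset X), G)) = dbl k R 0 (m + 1) := by
  rw [chains, Finsupp.lmapDomain_supported, dbl]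
  congr 1
  ext ⟨F, G⟩
  constructor
  · rintro ⟨G, ⟨⟨⟨y, hy⟩, hx⟩, hG⟩, h⟩
    obtain ⟨rfl, rfl⟩ := Prod.mk.inj h
    exact ⟨rfl, hG, by simp, hx, ⟨y, by simp⟩⟩
  · rintro ⟨hF, hG, -, hx, -⟩
    obtain rfl := Finset.card_eq_zero.1 hF
    exact ⟨G, ⟨⟨Finset.card_pos.1 (hG ▸ Nat.succ_pos m), hx⟩, hG⟩, rfl⟩

theorem dX_map (z : Finset X →₀ k) :
    dX k (Finsupp.lmapDomain k k (fun F : Finset X => (F, (∅ : Finset Y))) z) =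
      Finsupp.lmapDomain k k (fun F : Finset X => (F, (∅ : Finset Y))) (bd k z) :=
  fib_map k (Equiv.refl (Finset X × Finset Y)) (fun _ => bd k) ∅ z

theorem dY_map (z : Finset Y →₀ k) :
    dY k (Finsupp.lmapDomain k k (fun G : Finset Y => ((∅ : Finset X), G)) z) =
      Finsupp.lmapDomain k k (fun G : Finset Y => ((∅ : Finset X), G)) (bd k z) :=
  fib_map k (Equiv.prodComm (Finset Y) (Finset X)) (fun _ => bd k) ∅ z

/-- At the corner of an edge of the double complex the receptor is the homology of the edge, by
exactness in the other direction. -/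
theorem redHomologyRank_dowker (i : ℕ) :
    redHomologyRank k (dowker R) i = receptorRank (dX k) (dY k) (dbl k R) (i + 1) 0 := by
  have hinj : Function.Injective (fun F : Finset X => (F, (∅ : Finset Y))) :=
    fun F G h => (Prod.mk.inj h).1
  have h1 : dbl k R (i + 1) 0 ⊓ LinearMap.ker (dX k) ⊓ LinearMap.ker (dY k) =
      dbl k R (i + 1) 0 ⊓ LinearMap.ker (dX k) :=
    inf_eq_left.2 fun x hx => LinearMap.mem_ker.2 (dY_zero k R _ x hx.1)
  have h2 : (dbl k R (i + 1 + 1) (0 + 1)).map (dY k) = dbl k R (i + 2) 0 := by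
    apply le_antisymm
    · rintro _ ⟨x, hx, rfl⟩
      exact dY_mem k R _ _ x hx
    · intro x hx
      obtain ⟨y, hy, h⟩ := dY_exact k R _ _ x hx (dY_zero k R _ x hx)
      exact ⟨y, hy, h⟩
  have h3 : dY k ∘ₗ dX k = dX k ∘ₗ (dY k : (Finset X × Finset Y →₀ k) →ₗ[k] _) :=
    LinearMap.ext fun x => (dX_dY k x).symm
  rw [receptorRank, h1, h3, Submodule.map_comp, h2]
  exact redHomologyRank_eq_of_embedding k (dowker R) (dowker_down R) i
    (Finsupp.lmapDomain k k fun F : Finset X => (F, (∅ : Finset Y)))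
    (Finsupp.mapDomain_injective hinj) (dX k) (dX_map k) (fun m => dbl k R m 0)
    (map_chains_dowker k R)

theorem redHomologyRank_dowker_flip (i : ℕ) :
    redHomologyRank k (dowker (flip R)) i = receptorRank (dX k) (dY k) (dbl k R) 0 (i + 1) := by
  have hinj : Function.Injective (fun G : Finset Y => ((∅ : Finset X), G)) :=
    fun F G h => (Prod.mk.inj h).2
  have h1 : dbl k R 0 (i + 1) ⊓ LinearMap.ker (dX k) = dbl k R 0 (i + 1) :=
    inf_eq_left.2 fun x hx => LinearMap.mem_ker.2 (dX_zero k R _ x hx)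
  have h2 : (dbl k R (0 + 1) (i + 1 + 1)).map (dX k) = dbl k R 0 (i + 2) := by
    apply le_antisymm
    · rintro _ ⟨x, hx, rfl⟩
      exact dX_mem k R _ _ x hx
    · intro x hx
      obtain ⟨y, hy, h⟩ := dX_exact k R _ _ x hx (dX_zero k R _ x hx)
      exact ⟨y, hy, h⟩
  rw [receptorRank, h1, Submodule.map_comp, h2]
  exact redHomologyRank_eq_of_embedding k (dowker (flip R)) (dowker_down _) i
    (Finsupp.lmapDomain k k fun G : Finset Y => ((∅ : Finset X), G))
    (Finsupp.mapDomain_injective hinj) (dY k) (dY_map k) (fun m => dbl k R 0 m)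
    (map_chains_dowker_flip k R)

/-- **Dowker duality**: the two Dowker complexes of a finite relation have the same reduced
homology. -/
theorem dowker_duality (hR : {s : X × Y | R s.1 s.2}.Finite) (i : ℕ) :
    redHomologyRank k (dowker R) i = redHomologyRank k (dowker (flip R)) i := by
  have hfd : ∀ p q, FiniteDimensional k (dbl k R p q) := fun p q => by
    have : Finite (pairs R p q) := pairs_finite R hR p q
    exact Module.Finite.equiv (Finsupp.supportedEquivFinsupp (pairs R p q)).symm
  rw [redHomologyRank_dowker, redHomologyRank_dowker_flip,
    receptorRank_eq (dX k) (dY k) (dbl k R) (fbd_fbd k _) (fbd_fbd k _) (dX_dY k) (dX_mem k R)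
      (dY_mem k R) (dX_exact k R) (dY_exact k R) 0 (i + 1), zero_add]

end Duality

/-! ### The fibres -/

/-- The fibre `C_b` is finite: by Dickson's lemma it suffices that it is an antichain, and the
difference of two comparable elements is a nonnegative vector of `L`, hence zero. -/
theorem fiber_finite (n : ℕ) (L : AddSubgroup (Fin n → ℤ))
    (hL : ∀ w ∈ L, (∀ i, 0 ≤ w i) → w = 0) (b : (Fin n → ℤ) ⧸ L) :
    {u : Fin n →₀ ℕ | degQ n L u = b}.Finite := by
  have hinj : Function.Injective (fun u : Fin n →₀ ℕ => (u : Fin n → ℕ)) :=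
    DFunLike.coe_injective
  -- The order on `Fin n →₀ ℕ` in scope is a linear one, so comparison takes place in `Fin n → ℕ`.
  refine Set.Finite.of_finite_image (f := fun u : Fin n →₀ ℕ => (u : Fin n → ℕ)) ?_ hinj.injOn
  apply WellQuasiOrderedLE.finite_of_isAntichain
  rintro _ ⟨u, hu, rfl⟩ _ ⟨v, hv, rfl⟩ hne hle
  apply hne
  have hmem : -(fun i => (u i : ℤ)) + (fun i => (v i : ℤ)) ∈ L :=
    QuotientAddGroup.eq.1 (hu.trans hv.symm)
  have h0 := hL _ hmem fun i => by
    have : u i ≤ v i := hle i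
    simp only [Pi.add_apply, Pi.neg_apply]
    omega
  funext i
  have := congrFun h0 i
  simp only [Pi.add_apply, Pi.neg_apply, Pi.zero_apply] at this
  change u i = v i
  omega

end Dowker

/-- the gcd-complex `Δ_gcd(b)` and the complex `Δ_b` have the same
(reduced) homology in every degree: over the field `k` the reduced homology vector
spaces are isomorphic, i.e. they have the same dimension in every degree. -/
theorem gcdComplex_deltaComplex_same_homology (k : Type) [Field k] (n : ℕ)
    (L : AddSubgroup (Fin n → ℤ)) (hL : ∀ w ∈ L, (∀ i, 0 ≤ w i) → w = 0)
    (b : (Fin n → ℤ) ⧸ L) (hb : b ∈ Set.range (degQ n L)) (i : ℕ) :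
    redHomologyRank k (gcdComplex n L b) i = redHomologyRank k (deltaComplex n L b) i := by
  let R : (Fin n →₀ ℕ) → Fin n → Prop := fun u j => degQ n L u = b ∧ u j ≠ 0
  have h1 : gcdComplex n L b = Dowker.dowker R := by
    ext T
    constructor
    · rintro ⟨hT, hdeg, j, hj⟩
      exact ⟨hT, j, fun u hu => ⟨hdeg u hu, hj u hu⟩⟩
    · rintro ⟨hT, j, hj⟩
      exact ⟨hT, fun u hu => (hj u hu).1, j, fun u hu => (hj u hu).2⟩
  have h2 : deltaComplex n L b = Dowker.dowker (flip R) := by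
    ext F
    constructor
    · rintro ⟨hF, u, hu, hj⟩
      exact ⟨hF, u, fun j hjF => ⟨hu, hj j hjF⟩⟩
    · rintro ⟨⟨j, hj⟩, u, hu⟩
      exact ⟨⟨j, hj⟩, u, (hu j hj).1, fun j hj => (hu j hj).2⟩
  rw [h1, h2]
  apply Dowker.dowker_duality
  refine ((Dowker.fiber_finite n L hL b).prod (Set.finite_univ (α := Fin n))).subset ?_
  rintro ⟨u, j⟩ h
  exact ⟨h.1, trivial⟩
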